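/- arXiv:1203.3447 — 5 statements merged into one kernel-verified Lean document; each statement's English description precedes it below -/
import Mathlib

section
/- Let k ≥ 3 be an integer and let G be a simple graph on a finite vertex set V admitting a partition V = V_1 ∪ … ∪ V_{k−1} into pairwise disjoint sets, together with Hamilton cycles C_1, …, C_{k−1} of the induced subgraphs G[V_1], …, G[V_{k−1}], satisfying properties (i)–(vi). Then G is k-vertex-connected. -/
/-!
Delete a set `S` of at most `k - 1` vertices, and call a part light if it meets `S` at most once.
By counting there is a light part. A light part stays connected, being a cycle minus at most one
vertex, and of the three disjoint edges between two light parts one survives, so all light parts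
lie in one component of `G - S`.

Let `A` be the set of vertices outside that component. Parts meeting `A` contain at least two
vertices of `S`, so some part is disjoint from `S`; a vertex of `A` has no neighbor in such a part,
so by (v) there is only one, and counting again leaves a single part `V_j` with two vertices of `S`
and at most one vertex of `S` in each other part. Hence `A ⊆ V_j`, and by (vi) no two vertices of
`A` are consecutive on `C_j`: both cycle neighbors of a vertex of `A` lie in `S`, so they are the
two vertices of `V_j ∩ S`. The degree condition provides two adjacent vertices of `A`; having the
same two neighbors on `C_j`, they force `C_j` to be a 4-cycle.
-/

open Finset Function

section Counting

variable {V ι : Type*} [Fintype ι]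

theorem sum_card_inter_le_card [DecidableEq V] {P : ι → Finset V} (hP : Pairwise (Disjoint on P))
    (S : Finset V) : ∑ i, #(P i ∩ S) ≤ #S := by
  rw [← card_biUnion fun i _ j _ hij ↦ (hP hij).mono inter_subset_left inter_subset_left]
  exact card_le_card (biUnion_subset.2 fun _ _ ↦ inter_subset_right)

theorem exists_le_one_of_sum_le_card [Nonempty ι] {n : ι → ℕ}
    (hsum : ∑ i, n i ≤ Fintype.card ι) : ∃ i, n i ≤ 1 := by
  obtain ⟨i, -, hi⟩ := exists_le_of_sum_le (g := fun _ ↦ 1) univ_nonempty (by simpa using hsum)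
  exact ⟨i, hi⟩

theorem exists_eq_zero_and_eq_two_of_sum_le_card {n : ι → ℕ} (hsum : ∑ i, n i ≤ Fintype.card ι)
    (hzero : {i | n i = 0}.Subsingleton) {j : ι} (hj : 2 ≤ n j) :
    (∃ i, n i = 0) ∧ n j = 2 ∧ ∀ i, 2 ≤ n i → i = j := by
  classical
  have hzero_le : #{i | n i = 0} ≤ 1 :=
    card_le_one.2 fun a ha b hb ↦ hzero (by simpa using ha) (by simpa using hb)
  -- The excess `∑ i, (n i - 1)`, with truncated subtraction, is at most the number of zeros of `n`.
  have hexcess : ∑ i, (n i - 1) ≤ #{i | n i = 0} := by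
    have hsplit : ∑ i, (n i - 1) + Fintype.card ι = ∑ i, n i + #{i | n i = 0} := by
      rw [Fintype.card_eq_sum_ones, card_filter, ← sum_add_distrib, ← sum_add_distrib]
      exact sum_congr rfl fun i _ ↦ by split_ifs <;> omega
    omega
  have hj_le : n j - 1 ≤ ∑ i, (n i - 1) :=
    single_le_sum (f := fun i ↦ n i - 1) (fun _ _ ↦ Nat.zero_le _) (mem_univ j)
  refine ⟨?_, by omega, fun i hi ↦ ?_⟩
  · obtain ⟨i, hi⟩ := card_pos.1 (show 0 < #{i | n i = 0} by omega)
    exact ⟨i, by simpa using hi⟩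
  · by_contra hij
    have hpair := sum_le_univ_sum_of_nonneg (s := {i, j}) (w := fun i ↦ Nat.zero_le (n i - 1))
    rw [sum_pair hij] at hpair
    omega

theorem exists_notMem_of_card_inter_add_card_inter_lt [DecidableEq V] {x y : ι → V}
    (hx : Injective x) (hy : Injective y) {s t S : Finset V} (hxs : ∀ a, x a ∈ s)
    (hyt : ∀ a, y a ∈ t) (h : #(s ∩ S) + #(t ∩ S) < Fintype.card ι) :
    ∃ a, x a ∉ S ∧ y a ∉ S := by
  classical
  have hx_card : #{a | x a ∈ S} ≤ #(s ∩ S) :=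
    card_le_card_of_injOn x (fun a ha ↦ by simpa [hxs a] using ha) hx.injOn
  have hy_card : #{a | y a ∈ S} ≤ #(t ∩ S) :=
    card_le_card_of_injOn y (fun a ha ↦ by simpa [hyt a] using ha) hy.injOn
  have hunion : #{a | x a ∈ S ∨ y a ∈ S} < #(univ : Finset ι) := by
    rw [filter_or, card_univ]
    exact (card_union_le _ _).trans_lt (by omega)
  obtain ⟨a, -, ha⟩ := exists_mem_notMem_of_card_lt_card hunion
  exact ⟨a, by simpa using ha⟩

theorem add_one_lt_card_of_three_le_card [Fintype V] [Nonempty ι]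
    {P : ι → Finset V} (hPdisj : Pairwise (Disjoint on P)) (hP3 : ∀ i, 3 ≤ #(P i)) :
    Fintype.card ι + 1 < Fintype.card V := by
  classical
  have hsum : Fintype.card ι * 3 ≤ ∑ i, #(P i ∩ univ) := by
    simpa using sum_le_sum fun i (_ : i ∈ univ) ↦ hP3 i
  have hle := hsum.trans (sum_card_inter_le_card hPdisj univ)
  have hpos : 0 < Fintype.card ι := Fintype.card_pos
  rw [card_univ] at hle
  omega

end Counting

theorem isCycle_connected_induce_sdiff_singleton {V : Type*} {G : SimpleGraph V} {x : V}
    {p : G.Walk x x} (hp : p.IsCycle) :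
    (G.induce ({v | v ∈ p.support} \ {x})).Connected := by
  cases p with
  | nil => exact absurd hp SimpleGraph.Walk.not_isCycle_nil
  | cons hadj q =>
    have hq_nil : ¬ q.Nil := SimpleGraph.Walk.not_nil_of_ne hadj.ne'
    have hq_nodup := ((SimpleGraph.Walk.cons_isCycle_iff q hadj).1 hp).1.support_nodup
    have hsupport : {v | v ∈ (SimpleGraph.Walk.cons hadj q).support} \ {x} =
        {v | v ∈ q.dropLast.support} := by
      rw [← SimpleGraph.Walk.support_dropLast_concat hq_nil] at hq_nodup
      rw [SimpleGraph.Walk.support_cons, ← SimpleGraph.Walk.support_dropLast_concat hq_nil]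
      grind
    exact hsupport ▸ q.dropLast.connected_induce_support

theorem mem_of_reachable_of_neighborSet_subset {V : Type*} {G : SimpleGraph V} {T : Set V} {u v : V}
    (hT : ∀ a ∈ T, G.neighborSet a ⊆ T) (huv : G.Reachable u v) (hu : u ∈ T) : v ∈ T := by
  by_contra hv
  obtain ⟨p⟩ := huv
  obtain ⟨d, -, hfst, hsnd⟩ := p.exists_boundary_dart T hu hv
  exact hsnd (hT _ hfst d.adj)

/-- `C` is a Hamilton cycle on the vertex set `s`: its edges lie inside `s`, it is connected on `s`,
and it is `2`-regular there. Vertices outside `s` are isolated in `C`. -/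
structure IsHamiltonCycleOn {V : Type*} (C : SimpleGraph V) (s : Finset V) : Prop where
  mem_of_adj : ∀ u v, C.Adj u v → u ∈ s ∧ v ∈ s
  connected : (C.induce (s : Set V)).Connected
  ncard_neighborSet : ∀ u ∈ s, (C.neighborSet u).ncard = 2

namespace IsHamiltonCycleOn

variable {V : Type*} {C : SimpleGraph V} {s : Finset V} {u v w x : V}

theorem neighborSet_subset (h : IsHamiltonCycleOn C s) (u : V) : C.neighborSet u ⊆ s :=
  fun v huv ↦ (h.mem_of_adj u v huv).2

theorem reachable (h : IsHamiltonCycleOn C s) (hu : u ∈ s) (hv : v ∈ s) : C.Reachable u v :=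
  (h.connected.preconnected ⟨u, hu⟩ ⟨v, hv⟩).map (SimpleGraph.Embedding.induce _).toHom

theorem connectedComponent_supp (h : IsHamiltonCycleOn C s) (hx : x ∈ s) :
    (C.connectedComponentMk x).supp = s := by
  ext v
  rw [SimpleGraph.ConnectedComponent.mem_supp_iff, SimpleGraph.ConnectedComponent.eq]
  exact ⟨fun hvx ↦ mem_of_reachable_of_neighborSet_subset (fun a _ ↦ h.neighborSet_subset a)
    hvx.symm hx, fun hv ↦ h.reachable hv hx⟩

theorem three_le_card (h : IsHamiltonCycleOn C s) : 3 ≤ #s := by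
  obtain ⟨v, hv⟩ := h.connected.nonempty
  have hfin : (C.neighborSet v).Finite := s.finite_toSet.subset (h.neighborSet_subset v)
  have hinsert := Set.ncard_insert_of_notMem (a := v) (by simp) hfin
  have hle := Set.ncard_le_ncard (Set.insert_subset hv (h.neighborSet_subset v))
  rwa [hinsert, h.ncard_neighborSet v hv, Set.ncard_coe_finset] at hle

theorem induce_sdiff_singleton_connected [Finite V] (h : IsHamiltonCycleOn C s) (hx : x ∈ s) :
    (C.induce (↑s \ {x})).Connected := by
  have hcycles : C.IsCycles := fun v ⟨w, hvw⟩ ↦ h.ncard_neighborSet v (h.mem_of_adj v w hvw).1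
  have hx_nonempty : (C.neighborSet x).Nonempty :=
    Set.nonempty_of_ncard_ne_zero (by simp [h.ncard_neighborSet x hx])
  obtain ⟨p, hp, hverts⟩ := hcycles.exists_cycle_toSubgraph_verts_eq_connectedComponentSupp
    (c := C.connectedComponentMk x) rfl hx_nonempty
  have hsupport : {v | v ∈ p.support} = s := by
    rw [← p.verts_toSubgraph, hverts, h.connectedComponent_supp hx]
  exact hsupport ▸ isCycle_connected_induce_sdiff_singleton hp

theorem induce_sdiff_connected [Finite V] [DecidableEq V] (h : IsHamiltonCycleOn C s)
    {S : Finset V} (hS : #(s ∩ S) ≤ 1) : (C.induce (↑s \ ↑S)).Connected := by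
  obtain hempty | hone := Nat.le_one_iff_eq_zero_or_eq_one.1 hS
  · have hdisj : Disjoint s S := disjoint_iff_inter_eq_empty.2 (card_eq_zero.1 hempty)
    rw [(disjoint_coe.2 hdisj).sdiff_eq_left]
    exact h.connected
  · obtain ⟨x, hx⟩ := card_eq_one.1 hone
    have hxs : x ∈ s := (mem_inter.1 (hx ▸ mem_singleton_self x)).1
    rw [← Set.sdiff_self_inter, ← coe_inter, hx, coe_singleton]
    exact h.induce_sdiff_singleton_connected hxs

theorem card_eq_four_of_neighborSet_eq (h : IsHamiltonCycleOn C s) (hv : v ∈ s) (hw : w ∈ s)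
    (hvw : v ≠ w) (hN : C.neighborSet v = C.neighborSet w) : #s = 4 := by
  have hN_sub : ∀ u, C.neighborSet u ⊆ s := h.neighborSet_subset
  have hN_fin : ∀ u, (C.neighborSet u).Finite := fun u ↦ s.finite_toSet.subset (hN_sub u)
  have hN_common : ∀ z ∈ C.neighborSet v, C.neighborSet z = {v, w} := by
    intro z hz
    refine (Set.eq_of_subset_of_ncard_le ?_ ?_ (hN_fin z)).symm
    · exact Set.pair_subset hz.symm (hN ▸ hz : z ∈ C.neighborSet w).symm
    · rw [h.ncard_neighborSet z (hN_sub v hz), Set.ncard_pair hvw]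
  have hs : (s : Set V) = {v, w} ∪ C.neighborSet v := by
    refine Set.Subset.antisymm (fun z hz ↦ mem_of_reachable_of_neighborSet_subset ?_
      (h.reachable hv hz) (by simp)) (Set.union_subset (Set.pair_subset hv hw) (hN_sub v))
    rintro a ((rfl | rfl) | ha)
    · exact Set.subset_union_right
    · exact hN ▸ Set.subset_union_right
    · exact hN_common a ha ▸ Set.subset_union_left
  have hdisj : Disjoint {v, w} (C.neighborSet v) := by
    rw [Set.disjoint_insert_left, Set.disjoint_singleton_left]
    exact ⟨by simp, by simp [hN]⟩
  rw [← Set.ncard_coe_finset, hs, Set.ncard_union_eq hdisj (Set.toFinite _) (hN_fin v),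
    Set.ncard_pair hvw, h.ncard_neighborSet v hv]

end IsHamiltonCycleOn

/-- `G` has `n` pairwise vertex-disjoint edges from `s` to `t`. The two endpoint families are only
required to be injective separately, which suffices when `s` and `t` are disjoint. -/
def HasMatching {V : Type*} (G : SimpleGraph V) (n : ℕ) (s t : Finset V) : Prop :=
  ∃ x y : Fin n → V, Injective x ∧ Injective y ∧ ∀ a, x a ∈ s ∧ y a ∈ t ∧ G.Adj (x a) (y a)

theorem HasMatching.symm {V : Type*} {G : SimpleGraph V} {n : ℕ} {s t : Finset V} :
    HasMatching G n s t → HasMatching G n t s :=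
  fun ⟨x, y, hx, hy, h⟩ ↦ ⟨y, x, hy, hx, fun a ↦ ⟨(h a).2.1, (h a).1, (h a).2.2.symm⟩⟩

theorem HasMatching.exists_adj_notMem {V : Type*} [DecidableEq V] {G : SimpleGraph V} {n : ℕ}
    {s t S : Finset V} (h : HasMatching G n s t) (hS : #(s ∩ S) + #(t ∩ S) < n) :
    ∃ x ∈ (s : Set V) \ S, ∃ y ∈ (t : Set V) \ S, G.Adj x y := by
  obtain ⟨x, y, hx, hy, hxy⟩ := h
  obtain ⟨a, hxa, hya⟩ := exists_notMem_of_card_inter_add_card_inter_lt hx hy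
    (fun a ↦ (hxy a).1) (fun a ↦ (hxy a).2.1) (by simpa using hS)
  exact ⟨x a, ⟨(hxy a).1, hxa⟩, y a, ⟨(hxy a).2.1, hya⟩, (hxy a).2.2⟩

/-- The indices `j ≠ i` such that `u`, thought of as a vertex of the part `P i`, has no neighbor
in `P j`. -/
def missedParts {V ι : Type*} (G : SimpleGraph V) (P : ι → Finset V) (i : ι) (u : V) : Set ι :=
  {j | j ≠ i ∧ ∀ w ∈ P j, ¬ G.Adj u w}

section Partition

variable {V ι : Type*} [DecidableEq V] {G : SimpleGraph V} {P : ι → Finset V}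
  {C : ι → SimpleGraph V} {S : Finset V}

theorem reachable_of_card_inter_le_one [Finite V] (hCle : ∀ i, C i ≤ G)
    (hC : ∀ i, IsHamiltonCycleOn (C i) (P i))
    (hmatch : Pairwise fun i j ↦ HasMatching G 3 (P i) (P j)) {i j : ι}
    (hi : #(P i ∩ S) ≤ 1) (hj : #(P j ∩ S) ≤ 1) {u v : V} (hu : u ∈ P i) (hv : v ∈ P j)
    (huS : u ∈ (S : Set V)ᶜ) (hvS : v ∈ (S : Set V)ᶜ) :
    (G.induce (S : Set V)ᶜ).Reachable ⟨u, huS⟩ ⟨v, hvS⟩ := by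
  have hlight : ∀ l, #(P l ∩ S) ≤ 1 → (G.induce (↑(P l) \ ↑S)).Connected := fun l hl ↦
    ((hC l).induce_sdiff_connected hl).mono (SimpleGraph.comap_monotone _ (hCle l))
  have hunion : (G.induce (↑(P i) \ ↑S ∪ ↑(P j) \ ↑S)).Connected := by
    obtain rfl | hij := eq_or_ne i j
    · exact (Set.union_self _).symm ▸ hlight i hi
    · obtain ⟨x, hx, y, hy, hxy⟩ := (hmatch hij).exists_adj_notMem (S := S) (by omega)
      exact SimpleGraph.connected_induce_union (hlight i hi).preconnected
        (hlight j hj).preconnected hx hy hxy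
  have hsub : (↑(P i) \ ↑S ∪ ↑(P j) \ ↑S : Set V) ⊆ (S : Set V)ᶜ :=
    Set.union_subset (fun _ h ↦ h.2) fun _ h ↦ h.2
  exact (hunion.preconnected ⟨u, .inl ⟨hu, huS⟩⟩ ⟨v, .inr ⟨hv, hvS⟩⟩).map
    (G.induceHomOfLE hsub).toHom

variable {A : Set V} {j : ι} {v : V}

theorem mem_missedParts_of_card_inter_eq_zero (hA : ∀ v ∈ A, G.neighborSet v ⊆ A ∪ S)
    (hheavy : ∀ i, ∀ v ∈ A, v ∈ P i → 2 ≤ #(P i ∩ S)) (hv : v ∈ A) (hvj : v ∈ P j) {i : ι}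
    (hi : #(P i ∩ S) = 0) : i ∈ missedParts G P j v := by
  refine ⟨?_, fun w hw hvw ↦ ?_⟩
  · rintro rfl
    have := hheavy i v hv hvj
    omega
  · obtain hwA | hwS := hA v hv hvw
    · have := hheavy i w hwA hw
      omega
    · exact (card_pos.2 ⟨w, mem_inter.2 ⟨hw, hwS⟩⟩).ne' hi

theorem existsUnique_mem_missedParts_and_card_inter_eq_two_and_subset [Fintype ι]
    (hPcover : ∀ v, ∃ i, v ∈ P i)
    (hdom : ∀ i, ∀ u ∈ P i, (missedParts G P i u).Subsingleton)
    (hsum : ∑ i, #(P i ∩ S) ≤ Fintype.card ι) (hA : ∀ v ∈ A, G.neighborSet v ⊆ A ∪ S)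
    (hheavy : ∀ i, ∀ v ∈ A, v ∈ P i → 2 ≤ #(P i ∩ S)) (hv : v ∈ A) (hvj : v ∈ P j) :
    (∃! i, i ∈ missedParts G P j v) ∧ #(P j ∩ S) = 2 ∧ A ⊆ P j := by
  have hmissed : {i | #(P i ∩ S) = 0} ⊆ missedParts G P j v := fun i hi ↦
    mem_missedParts_of_card_inter_eq_zero hA hheavy hv hvj hi
  obtain ⟨⟨i, hi⟩, htwo, hunique⟩ :=
    exists_eq_zero_and_eq_two_of_sum_le_card hsum ((hdom j v hvj).anti hmissed) (hheavy j v hv hvj)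
  refine ⟨⟨i, hmissed hi, fun l hl ↦ hdom j v hvj hl (hmissed hi)⟩, htwo, fun w hw ↦ ?_⟩
  obtain ⟨l, hwl⟩ := hPcover w
  exact hunique l (hheavy l w hw hwl) ▸ hwl

theorem eq_empty_of_neighborSet_subset_union [Fintype ι] (hPcover : ∀ v, ∃ i, v ∈ P i)
    (hP4 : ∀ i, #(P i) ≠ 4) (hdeg : ∀ v ∈ A, #S < (G.neighborSet v).ncard)
    (hCle : ∀ i, C i ≤ G) (hC : ∀ i, IsHamiltonCycleOn (C i) (P i))
    (hdom : ∀ i, ∀ u ∈ P i, (missedParts G P i u).Subsingleton)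
    (hfar : ∀ i u v, (C i).Adj u v → (∃! j, j ∈ missedParts G P i u) →
      ¬ ∃! j, j ∈ missedParts G P i v)
    (hsum : ∑ i, #(P i ∩ S) ≤ Fintype.card ι) (hA : ∀ v ∈ A, G.neighborSet v ⊆ A ∪ S)
    (hheavy : ∀ i, ∀ v ∈ A, v ∈ P i → 2 ≤ #(P i ∩ S)) : A = ∅ := by
  refine Set.eq_empty_iff_forall_notMem.2 fun v hv ↦ ?_
  obtain ⟨j, hvj⟩ := hPcover v
  have hstruct {u : V} (hu : u ∈ A) (huj : u ∈ P j) :=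
    existsUnique_mem_missedParts_and_card_inter_eq_two_and_subset hPcover hdom hsum hA hheavy hu huj
  obtain ⟨-, htwo, hAj⟩ := hstruct hv hvj
  have hcycle_nbrs : ∀ u ∈ A, (C j).neighborSet u = ↑(P j ∩ S) := by
    intro u hu
    refine Set.eq_of_subset_of_ncard_le (fun w huw ↦ ?_) ?_ (finite_toSet _)
    · have hwj : w ∈ P j := (hC j).neighborSet_subset u huw
      have hwA : w ∉ A := fun hwA ↦
        hfar j u w huw (hstruct hu (hAj hu)).1 (hstruct hwA hwj).1
      exact mem_inter.2 ⟨hwj, (hA u hu (hCle j huw)).resolve_left hwA⟩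
    · rw [Set.ncard_coe_finset, htwo, (hC j).ncard_neighborSet u (hAj hu)]
  obtain ⟨w, hvw, hwS⟩ : ∃ w ∈ G.neighborSet v, w ∉ (S : Set V) :=
    Set.exists_mem_notMem_of_ncard_lt_ncard (by simpa using hdeg v hv)
  have hw : w ∈ A := (hA v hv hvw).resolve_right hwS
  exact hP4 j <| (hC j).card_eq_four_of_neighborSet_eq hvj (hAj hw) hvw.ne
    ((hcycle_nbrs v hv).trans (hcycle_nbrs w hw).symm)

end Partition

theorem stmt_0_general {V ι : Type*} [Fintype V] [Fintype ι] [Nonempty ι] (G : SimpleGraph V)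
    (P : ι → Finset V) (C : ι → SimpleGraph V) (hPdisj : Pairwise (Disjoint on P))
    (hPcover : ∀ v, ∃ i, v ∈ P i) (hP4 : ∀ i, #(P i) ≠ 4)
    (hdeg : ∀ v, Fintype.card ι < (G.neighborSet v).ncard) (hCle : ∀ i, C i ≤ G)
    (hC : ∀ i, IsHamiltonCycleOn (C i) (P i))
    (hmatch : Pairwise fun i j ↦ HasMatching G 3 (P i) (P j))
    (hdom : ∀ i, ∀ u ∈ P i, (missedParts G P i u).Subsingleton)
    (hfar : ∀ i u v, (C i).Adj u v → (∃! j, j ∈ missedParts G P i u) →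
      ¬ ∃! j, j ∈ missedParts G P i v) :
    Fintype.card ι + 1 < Fintype.card V ∧
      ∀ S : Set V, S.ncard ≤ Fintype.card ι → (G.induce Sᶜ).Connected := by
  classical
  refine ⟨add_one_lt_card_of_three_le_card hPdisj fun i ↦ (hC i).three_le_card, fun S hS ↦ ?_⟩
  lift S to Finset V using S.toFinite
  rw [Set.ncard_coe_finset] at hS
  have hsum := (sum_card_inter_le_card hPdisj S).trans hS
  obtain ⟨i, hi⟩ := exists_le_one_of_sum_le_card hsum
  obtain ⟨a, hai, haS⟩ := ((hC i).induce_sdiff_connected hi).nonempty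
  let A : Set V := {v | ∃ hv : v ∈ (S : Set V)ᶜ, ¬ (G.induce _).Reachable ⟨a, haS⟩ ⟨v, hv⟩}
  have hA : ∀ v ∈ A, G.neighborSet v ⊆ A ∪ S := by
    rintro v ⟨hvS, hav⟩ w hvw
    refine or_iff_not_imp_right.2 fun hwS ↦ ⟨hwS, fun haw ↦ hav (haw.trans ?_)⟩
    exact SimpleGraph.Adj.reachable (SimpleGraph.induce_adj.2 hvw.symm)
  have hheavy : ∀ l, ∀ v ∈ A, v ∈ P l → 2 ≤ #(P l ∩ S) := by
    rintro l v ⟨hvS, hav⟩ hvl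
    by_contra! hl
    exact hav (reachable_of_card_inter_le_one hCle hC hmatch hi (Nat.le_of_lt_succ hl) hai hvl _ _)
  have hA_empty : A = ∅ := eq_empty_of_neighborSet_subset_union hPcover hP4
    (fun v _ ↦ hS.trans_lt (hdeg v)) hCle hC hdom hfar hsum hA hheavy
  refine (SimpleGraph.connected_iff_exists_forall_reachable _).2 ⟨⟨a, haS⟩, fun ⟨v, hv⟩ ↦ ?_⟩
  by_contra hav
  exact Set.eq_empty_iff_forall_notMem.1 hA_empty v ⟨hv, hav⟩

/-- Let `k ≥ 3` and let `G` be a simple graph on a finite vertex set `V`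
admitting a partition `V = V_1 ∪ … ∪ V_{k-1}` into pairwise disjoint sets, together with
Hamilton cycles `C_1, …, C_{k-1}` of the induced subgraphs `G[V_i]` (formalized: each `C i`
is a subgraph of `G` whose edges lie inside `V i`, which is connected on `V i` and in which
every vertex of `V i` has degree exactly `2`), satisfying properties (i)–(vi).
Then `G` is `k`-vertex-connected: `|V| > k` and for every `S ⊆ V` with `|S| ≤ k - 1`,
the subgraph of `G` induced on `V \ S` is connected. -/
theorem stmt_0 {V : Type*} [Fintype V] (k : ℕ) (hk : 3 ≤ k)
    (G : SimpleGraph V) (P : Fin (k - 1) → Finset V) (C : Fin (k - 1) → SimpleGraph V)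
    -- the `P i` partition `V`
    (hPdisj : ∀ i j : Fin (k - 1), i ≠ j → Disjoint (P i) (P j))
    (hPcover : ∀ v : V, ∃ i : Fin (k - 1), v ∈ P i)
    -- (i) `|V_i| ≥ 5`
    (hP5 : ∀ i : Fin (k - 1), 5 ≤ (P i).card)
    -- (ii) every vertex has degree at least `k` in `G`
    (hdeg : ∀ v : V, k ≤ (G.neighborSet v).ncard)
    -- (iii) `C i` is a Hamilton cycle of `G[V_i]`
    (hCle : ∀ i, C i ≤ G)
    (hCin : ∀ i, ∀ u v : V, (C i).Adj u v → u ∈ P i ∧ v ∈ P i)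
    (hCconn : ∀ i, ((C i).induce (↑(P i) : Set V)).Connected)
    (hCdeg : ∀ i, ∀ u ∈ P i, ((C i).neighborSet u).ncard = 2)
    -- (iv) a matching of size `3` between `V_i` and `V_j`
    (hmatch : ∀ i j : Fin (k - 1), i < j →
      ∃ x y : Fin 3 → V, Function.Injective x ∧ Function.Injective y ∧
        ∀ a : Fin 3, x a ∈ P i ∧ y a ∈ P j ∧ G.Adj (x a) (y a))
    -- (v) every `u ∈ V_i` has a neighbor in all but at most one `V_j`, `j ≠ i`
    (hdom : ∀ i : Fin (k - 1), ∀ u ∈ P i,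
      {j : Fin (k - 1) | j ≠ i ∧ ∀ w ∈ P j, ¬ G.Adj u w}.Subsingleton)
    -- (vi) two distinct vertices of `V_i`, each having exactly one index `j ≠ i` with no
    -- neighbor in `V_j`, are not consecutive on the cycle `C i`
    (hfar : ∀ i : Fin (k - 1), ∀ u ∈ P i, ∀ v ∈ P i, u ≠ v →
      (∃! j : Fin (k - 1), j ≠ i ∧ ∀ w ∈ P j, ¬ G.Adj u w) →
      (∃! j : Fin (k - 1), j ≠ i ∧ ∀ w ∈ P j, ¬ G.Adj v w) →
      ¬ (C i).Adj u v) :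
    k < Fintype.card V ∧
      ∀ S : Set V, S.ncard ≤ k - 1 → (G.induce Sᶜ).Connected := by
  obtain ⟨n, rfl⟩ : ∃ n, k = n + 1 := ⟨k - 1, by omega⟩
  have : NeZero (n + 1 - 1) := ⟨by omega⟩
  simpa using stmt_0_general G P C hPdisj hPcover (fun i ↦ by have := hP5 i; omega)
    (by simpa using hdeg) hCle (fun i ↦ ⟨hCin i, hCconn i, hCdeg i⟩)
    (fun i j hij ↦ hij.lt_or_gt.elim (hmatch i j) fun hji ↦ HasMatching.symm (hmatch j i hji))
    hdom fun i u v huv hu hv ↦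
      hfar i u (hCin i u v huv).1 v (hCin i u v huv).2 huv.ne hu hv huv
end

section
/- Let k ≥ 3 be an integer and let G be a simple graph on a finite vertex set V admitting a partition V = V_1 ∪ … ∪ V_{k−1} into pairwise disjoint sets satisfying properties (i), (iii) and (iv). Then for every set S ⊆ V with |S ∩ V_i| = 1 for every 1 ≤ i ≤ k−1, the subgraph of G induced on V \ S is connected. -/
/-!
A connected finite `2`-regular graph is a cycle, and a cycle stays connected when one vertex is
deleted, because what is left is a path. So every part stays connected after the deletion of `S`.
Three disjoint edges join any two parts, and the two deleted vertices meet at most two of them,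
so one edge survives and connects what is left of the two parts. The same argument works when the
parts are `n`-connected, each loses fewer than `n` vertices, and any two parts that are adjacent in
some connected graph on the index set are joined by `2n - 1` disjoint edges.
-/

section

open SimpleGraph

variable {V ι : Type*} {G : SimpleGraph V} {A B S : Set V}

/-- The induced subgraph `G[A]` is `n`-connected: deleting fewer than `n` vertices leaves it
connected. As Mathlib's connected graphs are nonempty, this forces `n ≤ |A|`; unlike under the
convention demanding `n < |A|`, the complete graph on `n` vertices counts as `n`-connected. -/
def IsVertexConnectedOn (G : SimpleGraph V) (n : ℕ) (A : Set V) : Prop :=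
  ∀ T : Set V, T.encard < n → (G.induce (A \ T)).Connected

/-- A matching of size `n` between `A` and `B`, its `a`-th edge joining `x a ∈ A` to `y a ∈ B`. The
sets may overlap: the `x a` have to be distinct, and so do the `y a`, but `x a = y b` is allowed. -/
def HasMatchingBetween (G : SimpleGraph V) (n : ℕ) (A B : Set V) : Prop :=
  ∃ x y : Fin n → V, Function.Injective x ∧ Function.Injective y ∧
    ∀ a, x a ∈ A ∧ y a ∈ B ∧ G.Adj (x a) (y a)

theorem IsVertexConnectedOn.mono {H : SimpleGraph V} {n : ℕ} (hH : IsVertexConnectedOn H n A)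
    (hHG : H ≤ G) : IsVertexConnectedOn G n A :=
  fun T hT => (hH T hT).mono (comap_monotone _ hHG)

theorem IsVertexConnectedOn.connected_induce_diff {n : ℕ} (hA : IsVertexConnectedOn G n A)
    (hS : (S ∩ A).encard < n) : (G.induce (A \ S)).Connected := by
  have hdiff : A \ S = A \ (S ∩ A) := by grind
  rw [hdiff]
  exact hA (S ∩ A) hS

theorem HasMatchingBetween.symm {n : ℕ} (h : HasMatchingBetween G n A B) :
    HasMatchingBetween G n B A :=
  let ⟨x, y, hx, hy, hxy⟩ := h
  ⟨y, x, hy, hx, fun a => ⟨(hxy a).2.1, (hxy a).1, (hxy a).2.2.symm⟩⟩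

theorem HasMatchingBetween.exists_adj_notMem {n : ℕ} (h : HasMatchingBetween G n A B)
    (hS : (S ∩ A).encard + (S ∩ B).encard < n) : ∃ u ∈ A \ S, ∃ v ∈ B \ S, G.Adj u v := by
  obtain ⟨x, y, hx, hy, hxy⟩ := h
  suffices ∃ a, x a ∉ S ∧ y a ∉ S by
    obtain ⟨a, hxa, hya⟩ := this
    exact ⟨x a, ⟨(hxy a).1, hxa⟩, y a, ⟨(hxy a).2.1, hya⟩, (hxy a).2.2⟩
  by_contra! hall
  have hcover : x ⁻¹' S ∪ y ⁻¹' S = Set.univ :=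
    Set.eq_univ_of_forall fun a => or_iff_not_imp_left.2 (hall a)
  have hxS : (x ⁻¹' S).encard ≤ (S ∩ A).encard := by
    rw [← hx.encard_image]
    exact Set.encard_le_encard (Set.image_subset_iff.2 fun a ha => ⟨ha, (hxy a).1⟩)
  have hyS : (y ⁻¹' S).encard ≤ (S ∩ B).encard := by
    rw [← hy.encard_image]
    exact Set.encard_le_encard (Set.image_subset_iff.2 fun a ha => ⟨ha, (hxy a).2.1⟩)
  refine hS.not_ge ?_
  calc (n : ℕ∞) = (x ⁻¹' S ∪ y ⁻¹' S).encard := by simp [hcover]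
    _ ≤ (x ⁻¹' S).encard + (y ⁻¹' S).encard := Set.encard_union_le _ _
    _ ≤ (S ∩ A).encard + (S ∩ B).encard := add_le_add hxS hyS

theorem connected_induce_support_diff_singleton {v : V} {p : G.Walk v v} (hp : p.IsCycle) :
    (G.induce ({w | w ∈ p.support} \ {v})).Connected := by
  have hnil : ¬p.tail.Nil := by
    rw [← Walk.length_eq_zero_iff, Walk.length_tail]
    have := hp.three_le_length
    omega
  have hsupport : {w | w ∈ p.tail.dropLast.support} = {w | w ∈ p.support} \ {v} := by
    have hnodup : (p.tail.dropLast.support ++ [v]).Nodup := by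
      rw [Walk.support_dropLast_concat hnil]
      exact hp.isPath_tail.support_nodup
    ext w
    rw [← Walk.cons_support_tail hp.not_nil, ← Walk.support_dropLast_concat hnil]
    grind
  rw [← hsupport]
  exact p.tail.dropLast.connected_induce_support

theorem isVertexConnectedOn_two_of_isCycle {v : V} {p : G.Walk v v} (hp : p.IsCycle) :
    IsVertexConnectedOn G 2 {w | w ∈ p.support} := by
  classical
  intro T hT
  have hT' : T.encard ≤ 1 := Order.le_of_lt_add_one (by simpa [one_add_one_eq_two] using hT)
  rcases (Set.encard_le_one_iff_subsingleton.1 hT').eq_empty_or_singleton with rfl | ⟨s, rfl⟩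
  · rw [Set.sdiff_empty]
    exact p.connected_induce_support
  · by_cases hs : s ∈ p.support
    · have hrotate : {w | w ∈ p.support} = {w | w ∈ (p.rotate s hs).support} :=
        Set.ext fun w => (Walk.mem_support_rotate_iff p s hs).symm
      rw [hrotate]
      exact connected_induce_support_diff_singleton (hp.rotate hs)
    · rw [Set.sdiff_singleton_eq_self (s := {w | w ∈ p.support}) hs]
      exact p.connected_induce_support

theorem exists_isCycle_forall_mem_support [Finite V] (hG : G.Connected)
    (hdeg : ∀ v, (G.neighborSet v).ncard = 2) (v : V) :
    ∃ p : G.Walk v v, p.IsCycle ∧ ∀ w, w ∈ p.support := by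
  have hcycles : G.IsCycles := fun w _ => hdeg w
  have hne : (G.neighborSet v).Nonempty := Set.nonempty_of_ncard_ne_zero (by simp [hdeg])
  obtain ⟨p, hp, hverts⟩ := hcycles.exists_cycle_toSubgraph_verts_eq_connectedComponentSupp
    (ConnectedComponent.connectedComponentMk_mem (v := v)) hne
  refine ⟨p, hp, fun w => ?_⟩
  rw [← Walk.mem_verts_toSubgraph, hverts]
  exact ConnectedComponent.sound (hG.preconnected w v)

theorem exists_isCycle_support_eq (hA : A.Finite) (hclosed : ∀ u ∈ A, G.neighborSet u ⊆ A)
    (hconn : (G.induce A).Connected) (hdeg : ∀ u ∈ A, (G.neighborSet u).ncard = 2) :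
    ∃ (v : V) (p : G.Walk v v), p.IsCycle ∧ {w | w ∈ p.support} = A := by
  have := hA.to_subtype
  have hdeg' (u : A) : ((G.induce A).neighborSet u).ncard = 2 := by
    have hpreimage : (G.induce A).neighborSet u = Subtype.val ⁻¹' G.neighborSet u := rfl
    rw [hpreimage, Set.ncard_preimage_of_injective_subset_range Subtype.val_injective
      (by simpa only [Subtype.range_coe] using hclosed u u.2), hdeg u u.2]
  obtain ⟨v⟩ := hconn.nonempty
  obtain ⟨p, hp, hmem⟩ := exists_isCycle_forall_mem_support hconn hdeg' v
  refine ⟨_, p.map (Embedding.induce A).toHom, hp.map Subtype.val_injective, ?_⟩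
  ext w
  rw [Set.mem_ofPred_eq, Walk.support_map, List.mem_map]
  exact ⟨fun ⟨u, _, hu⟩ => hu ▸ u.2, fun hw => ⟨⟨w, hw⟩, hmem _, rfl⟩⟩

theorem connected_induce_biUnion_support {Q : SimpleGraph ι} {A : ι → Set V}
    (hA : ∀ i, (G.induce (A i)).Connected)
    (hadj : ∀ i j, Q.Adj i j → ∃ u ∈ A i, ∃ v ∈ A j, G.Adj u v) {i j : ι} (p : Q.Walk i j) :
    (G.induce (⋃ l ∈ p.support, A l)).Connected := by
  induction p with
  | @nil i =>
    have hnil : ⋃ l ∈ (Walk.nil : Q.Walk i i).support, A l = A i := by simp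
    rw [hnil]
    exact hA i
  | @cons i l j h p ih =>
    obtain ⟨u, hu, v, hv, huv⟩ := hadj i l h
    have hv' : v ∈ ⋃ l ∈ p.support, A l := Set.mem_biUnion p.start_mem_support hv
    have hcons : ⋃ m ∈ (Walk.cons h p).support, A m = A i ∪ ⋃ m ∈ p.support, A m := by
      simp [Set.iUnion_or, Set.iUnion_union_distrib]
    rw [hcons]
    exact connected_induce_union (hA i).preconnected ih.preconnected hu hv' huv

theorem connected_induce_iUnion_of_connected {Q : SimpleGraph ι} (hQ : Q.Connected)
    {A : ι → Set V} (hA : ∀ i, (G.induce (A i)).Connected)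
    (hadj : ∀ i j, Q.Adj i j → ∃ u ∈ A i, ∃ v ∈ A j, G.Adj u v) :
    (G.induce (⋃ i, A i)).Connected := by
  obtain ⟨i⟩ := hQ.nonempty
  obtain ⟨u, hu⟩ := (hA i).nonempty
  refine induce_connected_of_patches u (Set.mem_iUnion_of_mem i hu) fun {v} hv => ?_
  obtain ⟨j, hj⟩ := Set.mem_iUnion.1 hv
  obtain ⟨p⟩ := hQ.preconnected i j
  exact ⟨⋃ l ∈ p.support, A l, Set.iUnion₂_subset_iUnion _ _,
    Set.mem_biUnion p.start_mem_support hu, Set.mem_biUnion p.end_mem_support hj,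
    (connected_induce_biUnion_support hA hadj p).preconnected _ _⟩

theorem stmt_1_general {n : ℕ} {Q : SimpleGraph ι} (hQ : Q.Connected) {P : ι → Set V}
    (hcover : ∀ v, ∃ i, v ∈ P i) (hconn : ∀ i, IsVertexConnectedOn G n (P i))
    (hmatch : ∀ i j, Q.Adj i j → HasMatchingBetween G (2 * n - 1) (P i) (P j))
    (hS : ∀ i, (S ∩ P i).encard < n) : (G.induce Sᶜ).Connected := by
  have hcompl : Sᶜ = ⋃ i, P i \ S := by
    rw [← Set.iUnion_sdiff, Set.iUnion_eq_univ_iff.2 hcover, Set.compl_eq_univ_sdiff]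
  have hlt (i j : ι) : (S ∩ P i).encard + (S ∩ P j).encard < (2 * n - 1 : ℕ) := by
    have hi := hS i
    have hj := hS j
    lift (S ∩ P i).encard to ℕ using hi.ne_top with a
    lift (S ∩ P j).encard to ℕ using hj.ne_top with b
    norm_cast at hi hj ⊢
    omega
  rw [hcompl]
  exact connected_induce_iUnion_of_connected hQ (fun i => (hconn i).connected_induce_diff (hS i))
    fun i j hij => (hmatch i j hij).exists_adj_notMem (hlt i j)

end

/-- Let `k ≥ 3` and let `G` be a simple graph on a finite vertex set `V`
admitting a partition `V = V_1 ∪ … ∪ V_{k-1}` into pairwise disjoint sets satisfying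
(i) `|V_i| ≥ 5`, (iii) each induced subgraph `G[V_i]` has a Hamilton cycle (formalized:
a subgraph of `G` with edges inside `V_i`, connected on `V_i`, in which every vertex of
`V_i` has degree exactly `2`), and (iv) for `i < j` there is a matching of size `3`
between `V_i` and `V_j`. Then for every set `S ⊆ V` with `|S ∩ V_i| = 1` for every `i`,
the subgraph of `G` induced on `V \ S` is connected. -/
theorem stmt_1 {V : Type*} [Fintype V] (k : ℕ) (hk : 3 ≤ k)
    (G : SimpleGraph V) (P : Fin (k - 1) → Finset V)
    -- the `P i` partition `V`
    (hPdisj : ∀ i j : Fin (k - 1), i ≠ j → Disjoint (P i) (P j))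
    (hPcover : ∀ v : V, ∃ i : Fin (k - 1), v ∈ P i)
    -- (i) `|V_i| ≥ 5`
    (hP5 : ∀ i : Fin (k - 1), 5 ≤ (P i).card)
    -- (iii) `G[V_i]` has a Hamilton cycle
    (hHam : ∀ i : Fin (k - 1), ∃ C : SimpleGraph V, C ≤ G ∧
      (∀ u v : V, C.Adj u v → u ∈ P i ∧ v ∈ P i) ∧
      (C.induce (↑(P i) : Set V)).Connected ∧
      ∀ u ∈ P i, (C.neighborSet u).ncard = 2)
    -- (iv) a matching of size `3` between `V_i` and `V_j`
    (hmatch : ∀ i j : Fin (k - 1), i < j →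
      ∃ x y : Fin 3 → V, Function.Injective x ∧ Function.Injective y ∧
        ∀ a : Fin 3, x a ∈ P i ∧ y a ∈ P j ∧ G.Adj (x a) (y a)) :
    ∀ S : Set V, (∀ i : Fin (k - 1), (S ∩ ↑(P i)).ncard = 1) →
      (G.induce Sᶜ).Connected := by
  intro S hS
  have : Nonempty (Fin (k - 1)) := ⟨⟨0, by omega⟩⟩
  have hconn (i : Fin (k - 1)) : IsVertexConnectedOn G 2 (P i : Set V) := by
    obtain ⟨C, hCG, hCP, hC, hdeg⟩ := hHam i
    obtain ⟨v, p, hp, hsupport⟩ := exists_isCycle_support_eq (P i).finite_toSet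
      (fun u _ w huw => (hCP u w huw).2) hC hdeg
    exact hsupport ▸ (isVertexConnectedOn_two_of_isCycle hp).mono hCG
  have hlt (i : Fin (k - 1)) : (S ∩ P i).encard < (2 : ℕ) := by
    obtain ⟨s, hs⟩ := Set.ncard_eq_one.1 (hS i)
    simp [hs]
  exact stmt_1_general SimpleGraph.connected_top hPcover hconn
    (fun i j hij => hij.lt_or_gt.elim (hmatch i j)
      fun hji => HasMatchingBetween.symm (hmatch j i hji)) hlt
end

section
/- Let k ≥ 3 be an integer and let G be a simple graph on a finite vertex set V admitting a partition V = V_1 ∪ … ∪ V_{k−1} into pairwise disjoint sets satisfying properties (i), (iii), (iv) and (v). Then for all distinct indices i, j ∈ {1,…,k−1} and every set S ⊆ V with S ∩ (V_i ∪ V_j) = ∅, the subgraph of G induced on V \ S is connected. -/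
/-! A set `s` that induces a connected subgraph and dominates `t ⊇ s` makes `t` induce a connected
subgraph. Here `s = V_i ∪ V_j` is connected because both parts are and some edge joins them, and it
dominates: a vertex of a third part misses at most one of `V_i` and `V_j`. -/

section

variable {V ι : Type*} {G : SimpleGraph V}

theorem connected_induce_of_forall_exists_adj {s t : Set V} (hst : s ⊆ t)
    (hs : (G.induce s).Connected) (hdom : ∀ v ∈ t \ s, ∃ w ∈ s, G.Adj v w) :
    (G.induce t).Connected := by
  have reachable_of_mem {v w : V} (hv : v ∈ s) (hw : w ∈ s) :
      (G.induce t).Reachable ⟨v, hst hv⟩ ⟨w, hst hw⟩ :=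
    (hs ⟨v, hv⟩ ⟨w, hw⟩).map (G.induceHomOfLE hst).toHom
  obtain ⟨a, ha⟩ := hs.nonempty
  refine (SimpleGraph.connected_iff_exists_forall_reachable _).mpr ⟨⟨a, hst ha⟩, ?_⟩
  rintro ⟨v, hvt⟩
  by_cases hvs : v ∈ s
  · exact reachable_of_mem ha hvs
  · obtain ⟨w, hws, hvw⟩ := hdom v ⟨hvt, hvs⟩
    have hwv : (G.induce t).Adj ⟨w, hst hws⟩ ⟨v, hvt⟩ := hvw.symm
    exact (reachable_of_mem ha hws).trans hwv.reachable

theorem exists_mem_union_adj_of_subsingleton {P : ι → Set V} {u : V} {i j l : ι}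
    (hmiss : {m | m ≠ l ∧ ∀ w ∈ P m, ¬ G.Adj u w}.Subsingleton)
    (hij : i ≠ j) (hil : i ≠ l) (hjl : j ≠ l) : ∃ w ∈ P i ∪ P j, G.Adj u w := by
  by_contra! hnone
  exact hij <| hmiss ⟨hil, fun w hw ↦ hnone w (.inl hw)⟩ ⟨hjl, fun w hw ↦ hnone w (.inr hw)⟩

theorem pairwise_exists_adj_of_lt [LinearOrder ι] {P : ι → Set V}
    (hlt : ∀ ⦃i j⦄, i < j → ∃ u ∈ P i, ∃ v ∈ P j, G.Adj u v) :
    Pairwise fun i j ↦ ∃ u ∈ P i, ∃ v ∈ P j, G.Adj u v :=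
  haveI : Std.Symm fun i j ↦ ∃ u ∈ P i, ∃ v ∈ P j, G.Adj u v :=
    ⟨fun _ _ ⟨u, hu, v, hv, huv⟩ ↦ ⟨v, hv, u, hu, huv.symm⟩⟩
  Pairwise.of_lt hlt

theorem stmt_2_general {P : ι → Set V} (hcover : ∀ v, ∃ l, v ∈ P l)
    (hdom : ∀ l, ∀ u ∈ P l, {m | m ≠ l ∧ ∀ w ∈ P m, ¬ G.Adj u w}.Subsingleton)
    {i j : ι} (hij : i ≠ j)
    (hi : (G.induce (P i)).Preconnected) (hj : (G.induce (P j)).Preconnected)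
    (hedge : ∃ u ∈ P i, ∃ v ∈ P j, G.Adj u v) {S : Set V} (hS : Disjoint S (P i ∪ P j)) :
    (G.induce Sᶜ).Connected := by
  obtain ⟨a, ha, b, hb, hab⟩ := hedge
  have hunion : (G.induce (P i ∪ P j)).Connected := G.connected_induce_union hi hj ha hb hab
  refine connected_induce_of_forall_exists_adj hS.subset_compl_left hunion fun u hu ↦ ?_
  obtain ⟨l, hl⟩ := hcover u
  have hil : i ≠ l := by rintro rfl; exact hu.2 (.inl hl)
  have hjl : j ≠ l := by rintro rfl; exact hu.2 (.inr hl)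
  exact exists_mem_union_adj_of_subsingleton (hdom l u hl) hij hil hjl

end

/-- Let `k ≥ 3` and let `G` be a simple graph on a finite vertex set `V`
admitting a partition `V = V_1 ∪ … ∪ V_{k-1}` into pairwise disjoint sets satisfying
(i) `|V_i| ≥ 5`, (iii) each induced subgraph `G[V_i]` has a Hamilton cycle (formalized:
a subgraph of `G` with edges inside `V_i`, connected on `V_i`, in which every vertex of
`V_i` has degree exactly `2`), (iv) for `i < j` there is a matching of size `3` between
`V_i` and `V_j`, and (v) every `u ∈ V_i` has a neighbor in all but at most one `V_j`,
`j ≠ i`. Then for all distinct indices `i, j` and every set `S ⊆ V` with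
`S ∩ (V_i ∪ V_j) = ∅`, the subgraph of `G` induced on `V \ S` is connected. -/
theorem stmt_2 {V : Type*} [Fintype V] (k : ℕ) (hk : 3 ≤ k)
    (G : SimpleGraph V) (P : Fin (k - 1) → Finset V)
    -- the `P i` partition `V`
    (hPdisj : ∀ i j : Fin (k - 1), i ≠ j → Disjoint (P i) (P j))
    (hPcover : ∀ v : V, ∃ i : Fin (k - 1), v ∈ P i)
    -- (i) `|V_i| ≥ 5`
    (hP5 : ∀ i : Fin (k - 1), 5 ≤ (P i).card)
    -- (iii) `G[V_i]` has a Hamilton cycle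
    (hHam : ∀ i : Fin (k - 1), ∃ C : SimpleGraph V, C ≤ G ∧
      (∀ u v : V, C.Adj u v → u ∈ P i ∧ v ∈ P i) ∧
      (C.induce (↑(P i) : Set V)).Connected ∧
      ∀ u ∈ P i, (C.neighborSet u).ncard = 2)
    -- (iv) a matching of size `3` between `V_i` and `V_j`
    (hmatch : ∀ i j : Fin (k - 1), i < j →
      ∃ x y : Fin 3 → V, Function.Injective x ∧ Function.Injective y ∧
        ∀ a : Fin 3, x a ∈ P i ∧ y a ∈ P j ∧ G.Adj (x a) (y a))
    -- (v) every `u ∈ V_i` has a neighbor in all but at most one `V_j`, `j ≠ i`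
    (hdom : ∀ i : Fin (k - 1), ∀ u ∈ P i,
      {j : Fin (k - 1) | j ≠ i ∧ ∀ w ∈ P j, ¬ G.Adj u w}.Subsingleton) :
    ∀ i j : Fin (k - 1), i ≠ j → ∀ S : Set V,
      S ∩ (↑(P i) ∪ ↑(P j)) = ∅ → (G.induce Sᶜ).Connected := by
  intro i j hij S hS
  have hconn (l : Fin (k - 1)) : (G.induce (P l : Set V)).Preconnected := by
    obtain ⟨C, hCG, -, hC, -⟩ := hHam l
    exact hC.preconnected.mono fun _ _ h ↦ hCG h
  have hedge : Pairwise fun l m ↦ ∃ u ∈ (P l : Set V), ∃ v ∈ (P m : Set V), G.Adj u v := by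
    refine pairwise_exists_adj_of_lt (P := fun l ↦ (P l : Set V)) fun l m hlm ↦ ?_
    obtain ⟨x, y, -, -, hxy⟩ := hmatch l m hlm
    exact ⟨x 0, (hxy 0).1, y 0, (hxy 0).2⟩
  exact stmt_2_general (P := fun l ↦ (P l : Set V)) hPcover hdom hij (hconn i) (hconn j)
    (hedge hij) (Set.disjoint_iff_inter_eq_empty.mpr hS)
end

section
/- Let k ≥ 3 be an integer and let G be a simple graph on a finite vertex set V admitting a partition V = V_1 ∪ … ∪ V_{k−1} into pairwise disjoint sets, together with Hamilton cycles C_1, …, C_{k−1} of the induced subgraphs G[V_1], …, G[V_{k−1}], satisfying properties (i)–(vi). Let S ⊆ V be a set for which there exist distinct indices i, j ∈ {1,…,k−1} such that S ∩ V_i = ∅, |S ∩ V_j| = 2, and |S ∩ V_t| = 1 for every t ∈ {1,…,k−1} \ {i,j}. Then the subgraph of G induced on V \ S is connected. -/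
/-! Suppose a union `U` of connected components of `G - S` avoids `V_i`. A vertex of `U` has no
neighbour in `V_i`, so by (v) and (vi) no two vertices of `U` are consecutive on a cycle `C_t`;
since `U` is closed under adjacency outside `S`, both cycle neighbours of a vertex of `U ∩ V_t` lie
in `S ∩ V_t`. This is impossible for `t ≠ j`, where `|S ∩ V_t| ≤ 1`. As `|S| = k - 1`, a vertex of
`U ∩ V_j` has a neighbour outside `S`, which again lies in `U ∩ V_j`. These two vertices have the
same two neighbours on `C_j`, so `C_j` is a 4-cycle, contradicting `|V_j| ≥ 5`. Hence `U = ∅`, and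
every component of `G - S` meets the connected set `V_i`. -/

open Set

section

variable {V ι : Type*} {G C : SimpleGraph V} {S T A B U : Set V}

/-- `C` is a cycle with vertex set `A`, encoded as a connected 2-regular graph on `A` (viewed as a
graph on all of `V` with no further edges). For infinite `A` this is a two-way infinite path.
It models the Hamilton cycle of a part of the partition. -/
structure IsCycleOn (C : SimpleGraph V) (A : Set V) : Prop where
  mem_of_adj : ∀ ⦃u v⦄, C.Adj u v → u ∈ A ∧ v ∈ A
  connected : (C.induce A).Connected
  encard_neighborSet : ∀ u ∈ A, (C.neighborSet u).encard = 2

/-- `U` is a union of vertex sets of connected components of `G - S`, encoded as closure under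
adjacency outside `S`. Connectedness of `G - S` amounts to every nonempty such `U` meeting a fixed
connected part of it. -/
structure IsUnionOfComponents (G : SimpleGraph V) (S U : Set V) : Prop where
  disjoint : Disjoint U S
  mem_of_adj : ∀ ⦃u v⦄, u ∈ U → v ∉ S → G.Adj u v → v ∈ U

theorem subset_of_induce_preconnected (hA : (C.induce A).Preconnected) (hne : (A ∩ U).Nonempty)
    (hU : ∀ ⦃u v⦄, u ∈ U → C.Adj u v → v ∈ U) : A ⊆ U := by
  obtain ⟨u, huA, huU⟩ := hne
  intro v hvA
  by_contra hvU
  obtain ⟨p⟩ := hA ⟨u, huA⟩ ⟨v, hvA⟩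
  obtain ⟨d, -, hfst, hsnd⟩ := p.exists_boundary_dart (Subtype.val ⁻¹' U) huU hvU
  exact hsnd (hU hfst d.adj)

theorem connected_induce_compl (hB : (G.induce B).Connected) (hBS : Disjoint B S)
    (h : ∀ U, IsUnionOfComponents G S U → Disjoint U B → U = ∅) : (G.induce Sᶜ).Connected := by
  have hBS' : B ⊆ Sᶜ := hBS.subset_compl_right
  obtain ⟨b, hb⟩ := hB.nonempty
  let U : Set V := {v | ∃ hv : v ∉ S, ¬ (G.induce Sᶜ).Reachable ⟨b, hBS' hb⟩ ⟨v, hv⟩}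
  have hU : IsUnionOfComponents G S U :=
    { disjoint := Set.disjoint_left.2 fun _ hv ↦ hv.1
      mem_of_adj := by
        rintro u v ⟨hu, hbu⟩ hv huv
        have hvu : (G.induce Sᶜ).Adj ⟨v, hv⟩ ⟨u, hu⟩ := huv.symm
        exact ⟨hv, fun hbv ↦ hbu (hbv.trans hvu.reachable)⟩ }
  have hUB : Disjoint U B := Set.disjoint_left.2 fun v ⟨_, hbv⟩ hvB ↦
    hbv ((hB.preconnected ⟨b, hb⟩ ⟨v, hvB⟩).map (G.induceHomOfLE hBS').toHom)
  refine SimpleGraph.connected_iff_exists_forall_reachable _ |>.2 ⟨⟨b, hBS' hb⟩, fun ⟨v, hv⟩ ↦ ?_⟩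
  by_contra hbv
  exact (h U hU hUB).subset (show v ∈ U from ⟨hv, hbv⟩)

namespace IsCycleOn

theorem induce_connected (hC : IsCycleOn C A) (hCG : C ≤ G) : (G.induce A).Connected :=
  hC.connected.mono fun _ _ h ↦ hCG h

theorem encard_le_four_of_neighborSet_eq (hC : IsCycleOn C A) {u v : V} (hu : u ∈ A) (hv : v ∈ A)
    (huv : u ≠ v) (h : C.neighborSet u = C.neighborSet v) : A.encard ≤ 4 := by
  have neighborSet_eq_pair : ∀ s ∈ C.neighborSet u, C.neighborSet s = {u, v} := by
    intro s hs
    refine ((toFinite {u, v}).eq_of_subset_of_encard_le ?_ ?_).symm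
    · exact Set.pair_subset (C.adj_symm hs) (C.adj_symm (h.subset hs))
    · rw [hC.encard_neighborSet s (hC.mem_of_adj hs).2, encard_pair huv]
  have hA : A ⊆ {u, v} ∪ C.neighborSet u := by
    refine subset_of_induce_preconnected hC.connected.preconnected ⟨u, hu, by simp⟩ ?_
    rintro x y ((rfl | rfl) | hx) hxy
    · exact Or.inr hxy
    · exact Or.inr (h.superset hxy)
    · exact Or.inl ((neighborSet_eq_pair x hx).subset hxy)
  calc A.encard ≤ ({u, v} ∪ C.neighborSet u).encard := encard_le_encard hA
    _ ≤ ({u, v} : Set V).encard + (C.neighborSet u).encard := encard_union_le _ _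
    _ = 4 := by rw [encard_pair huv, hC.encard_neighborSet u hu]; norm_num

theorem disjoint_of_neighborSet_subset (hC : IsCycleOn C A)
    (hU : ∀ u ∈ U, C.neighborSet u ⊆ T) (hT : T.encard ≤ 1) : Disjoint U A := by
  refine Set.disjoint_left.2 fun u hu huA ↦ ?_
  have two_le_one : (2 : ℕ∞) ≤ 1 :=
    (hC.encard_neighborSet u huA).symm.trans_le ((encard_le_encard (hU u hu)).trans hT)
  exact absurd two_le_one (by norm_num)

theorem inter_subsingleton_of_neighborSet_subset (hC : IsCycleOn C A) (hA : 4 < A.encard)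
    (hU : ∀ u ∈ U, C.neighborSet u ⊆ T) (hT : T.encard ≤ 2) : (U ∩ A).Subsingleton := by
  have neighborSet_eq : ∀ u ∈ U ∩ A, C.neighborSet u = T := fun u ⟨hu, huA⟩ ↦
    (finite_of_encard_le_coe hT).eq_of_subset_of_encard_le' (hU u hu)
      (by rwa [hC.encard_neighborSet u huA])
  intro u hu v hv
  by_contra huv
  have h : C.neighborSet u = C.neighborSet v := by rw [neighborSet_eq u hu, neighborSet_eq v hv]
  exact hA.not_ge (hC.encard_le_four_of_neighborSet_eq hu.2 hv.2 huv h)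

end IsCycleOn

namespace IsUnionOfComponents

theorem not_adj (hU : IsUnionOfComponents G S U) (hUB : Disjoint U B) (hBS : Disjoint B S) {u w : V}
    (hu : u ∈ U) (hw : w ∈ B) : ¬ G.Adj u w := fun huw ↦
  hUB.notMem_of_mem_left (hU.mem_of_adj hu (hBS.notMem_of_mem_left hw) huw) hw

theorem exists_adj_mem (hU : IsUnionOfComponents G S U) {u : V} (hu : u ∈ U)
    (hdeg : S.encard < (G.neighborSet u).encard) : ∃ v ∈ U, G.Adj u v := by
  obtain ⟨v, huv, hvS⟩ := Set.not_subset.1 fun h ↦ (encard_le_encard h).not_gt hdeg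
  exact ⟨v, hU.mem_of_adj hu hvS huv, huv⟩

theorem neighborSet_subset (hU : IsUnionOfComponents G S U) (hUB : Disjoint U B)
    (hBS : Disjoint B S) (hCG : C ≤ G)
    (hCB : ∀ ⦃u v⦄, C.Adj u v → ∃ w ∈ B, G.Adj u w ∨ G.Adj v w) {u : V} (hu : u ∈ U) :
    C.neighborSet u ⊆ S := by
  intro v huv
  by_contra hvS
  have hv : v ∈ U := hU.mem_of_adj hu hvS (hCG huv)
  obtain ⟨w, hw, huw | hvw⟩ := hCB huv
  · exact hU.not_adj hUB hBS hu hw huw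
  · exact hU.not_adj hUB hBS hv hw hvw

end IsUnionOfComponents

theorem encard_le_card_of_encard_inter_le [Fintype ι] {P : ι → Set V} {i j : ι} (hij : i ≠ j)
    (hcover : S ⊆ ⋃ t, P t) (hpair : (S ∩ P i).encard + (S ∩ P j).encard ≤ 2)
    (hone : ∀ t, t ≠ i → t ≠ j → (S ∩ P t).encard ≤ 1) : S.encard ≤ Fintype.card ι := by
  classical
  have hrest : ∑ t ∈ ({i, j} : Finset ι)ᶜ, (S ∩ P t).encard ≤ (({i, j} : Finset ι)ᶜ.card : ℕ∞) := by
    refine (Finset.sum_le_card_nsmul _ _ 1 fun t ht ↦ ?_).trans_eq (by simp)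
    simp only [Finset.mem_compl, Finset.mem_insert, Finset.mem_singleton, not_or] at ht
    exact hone t ht.1 ht.2
  calc S.encard = (⋃ t, S ∩ P t).encard := by rw [← inter_iUnion, inter_eq_left.2 hcover]
    _ ≤ ∑ t, (S ∩ P t).encard := encard_iUnion_le_of_fintype _
    _ = (S ∩ P i).encard + (S ∩ P j).encard + ∑ t ∈ ({i, j} : Finset ι)ᶜ, (S ∩ P t).encard := by
      rw [← Finset.sum_pair (f := fun t ↦ (S ∩ P t).encard) hij, Finset.sum_add_sum_compl]
    _ ≤ 2 + (({i, j} : Finset ι)ᶜ.card : ℕ∞) := add_le_add hpair hrest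
    _ = Fintype.card ι := by
      rw [← Finset.card_add_card_compl {i, j}, Finset.card_pair hij]
      norm_cast

theorem stmt_3_general [Fintype ι] {P : ι → Set V} {C : ι → SimpleGraph V} {i j : ι}
    (hcover : ∀ v, ∃ t, v ∈ P t) (hdeg : ∀ v, (Fintype.card ι : ℕ∞) < (G.neighborSet v).encard)
    (hCG : ∀ t, C t ≤ G) (hC : ∀ t, IsCycleOn (C t) (P t))
    (hCi : ∀ t, t ≠ i → ∀ ⦃u v⦄, (C t).Adj u v → ∃ w ∈ P i, G.Adj u w ∨ G.Adj v w)
    (hPj : 4 < (P j).encard) (hij : i ≠ j)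
    (hSi : Disjoint (P i) S) (hSj : (S ∩ P j).encard ≤ 2)
    (hSt : ∀ t, t ≠ i → t ≠ j → (S ∩ P t).encard ≤ 1) : (G.induce Sᶜ).Connected := by
  have hS : S.encard ≤ Fintype.card ι :=
    encard_le_card_of_encard_inter_le hij (fun v _ ↦ mem_iUnion.2 (hcover v))
      (by simpa [hSi.symm.inter_eq] using hSj) hSt
  refine connected_induce_compl ((hC i).induce_connected (hCG i)) hSi fun U hU hUi ↦ ?_
  have hN : ∀ t, t ≠ i → ∀ u ∈ U, (C t).neighborSet u ⊆ S ∩ P t := fun t hti u hu ↦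
    subset_inter (hU.neighborSet_subset hUi hSi (hCG t) (hCi t hti) hu)
      fun _ huv ↦ ((hC t).mem_of_adj huv).2
  have hUt : ∀ t, t ≠ j → Disjoint U (P t) := fun t htj ↦ by
    obtain rfl | hti := eq_or_ne t i
    · exact hUi
    · exact (hC t).disjoint_of_neighborSet_subset (hN t hti) (hSt t hti htj)
  have hUj : U ⊆ P j := fun v hv ↦ by
    obtain ⟨t, ht⟩ := hcover v
    obtain rfl | htj := eq_or_ne t j
    · exact ht
    · exact ((hUt t htj).notMem_of_mem_left hv ht).elim
  have hUj_subsingleton : (U ∩ P j).Subsingleton :=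
    (hC j).inter_subsingleton_of_neighborSet_subset hPj (hN j hij.symm) hSj
  refine eq_empty_of_forall_notMem fun u hu ↦ ?_
  obtain ⟨v, hv, huv⟩ := hU.exists_adj_mem hu (hS.trans_lt (hdeg u))
  exact huv.ne (hUj_subsingleton ⟨hu, hUj hu⟩ ⟨hv, hUj hv⟩)

theorem exists_adj_or_adj_of_adj {P : ι → Set V} {t i : ι} (hti : t ≠ i)
    (hdom : ∀ u ∈ A, {l | l ≠ t ∧ ∀ w ∈ P l, ¬ G.Adj u w}.Subsingleton)
    (hfar : ∀ u ∈ A, ∀ v ∈ A, u ≠ v → (∃! l, l ≠ t ∧ ∀ w ∈ P l, ¬ G.Adj u w) →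
      (∃! l, l ≠ t ∧ ∀ w ∈ P l, ¬ G.Adj v w) → ¬ C.Adj u v)
    ⦃u v : V⦄ (hu : u ∈ A) (hv : v ∈ A) (huv : C.Adj u v) :
    ∃ w ∈ P i, G.Adj u w ∨ G.Adj v w := by
  have existsUnique_of_not_adj : ∀ x ∈ A, (∀ w ∈ P i, ¬ G.Adj x w) →
      ∃! l, l ≠ t ∧ ∀ w ∈ P l, ¬ G.Adj x w := fun x hx h ↦
    ⟨i, ⟨hti.symm, h⟩, fun _ hl ↦ hdom x hx hl ⟨hti.symm, h⟩⟩
  by_contra! h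
  exact hfar u hu v hv huv.ne (existsUnique_of_not_adj u hu fun w hw ↦ (h w hw).1)
    (existsUnique_of_not_adj v hv fun w hw ↦ (h w hw).2) huv

end

/-- Let `k ≥ 3` and let `G` be a simple graph on a finite vertex set `V`
admitting a partition `V = V_1 ∪ … ∪ V_{k-1}` into pairwise disjoint sets, together with
Hamilton cycles `C_1, …, C_{k-1}` of the induced subgraphs `G[V_i]`, satisfying
properties (i)–(vi). Let `S ⊆ V` be a set for which there exist distinct indices `i, j`
with `S ∩ V_i = ∅`, `|S ∩ V_j| = 2` and `|S ∩ V_t| = 1` for every `t ∉ {i, j}`.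
Then the subgraph of `G` induced on `V \ S` is connected. -/
theorem stmt_3 {V : Type*} [Fintype V] (k : ℕ) (hk : 3 ≤ k)
    (G : SimpleGraph V) (P : Fin (k - 1) → Finset V) (C : Fin (k - 1) → SimpleGraph V)
    -- the `P i` partition `V`
    (hPdisj : ∀ i j : Fin (k - 1), i ≠ j → Disjoint (P i) (P j))
    (hPcover : ∀ v : V, ∃ i : Fin (k - 1), v ∈ P i)
    -- (i) `|V_i| ≥ 5`
    (hP5 : ∀ i : Fin (k - 1), 5 ≤ (P i).card)
    -- (ii) every vertex has degree at least `k` in `G`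
    (hdeg : ∀ v : V, k ≤ (G.neighborSet v).ncard)
    -- (iii) `C i` is a Hamilton cycle of `G[V_i]`
    (hCle : ∀ i, C i ≤ G)
    (hCin : ∀ i, ∀ u v : V, (C i).Adj u v → u ∈ P i ∧ v ∈ P i)
    (hCconn : ∀ i, ((C i).induce (↑(P i) : Set V)).Connected)
    (hCdeg : ∀ i, ∀ u ∈ P i, ((C i).neighborSet u).ncard = 2)
    -- (iv) a matching of size `3` between `V_i` and `V_j`
    (hmatch : ∀ i j : Fin (k - 1), i < j →
      ∃ x y : Fin 3 → V, Function.Injective x ∧ Function.Injective y ∧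
        ∀ a : Fin 3, x a ∈ P i ∧ y a ∈ P j ∧ G.Adj (x a) (y a))
    -- (v) every `u ∈ V_i` has a neighbor in all but at most one `V_j`, `j ≠ i`
    (hdom : ∀ i : Fin (k - 1), ∀ u ∈ P i,
      {j : Fin (k - 1) | j ≠ i ∧ ∀ w ∈ P j, ¬ G.Adj u w}.Subsingleton)
    -- (vi) two distinct vertices of `V_i`, each having exactly one index `j ≠ i` with no
    -- neighbor in `V_j`, are not consecutive on the cycle `C i`
    (hfar : ∀ i : Fin (k - 1), ∀ u ∈ P i, ∀ v ∈ P i, u ≠ v →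
      (∃! j : Fin (k - 1), j ≠ i ∧ ∀ w ∈ P j, ¬ G.Adj u w) →
      (∃! j : Fin (k - 1), j ≠ i ∧ ∀ w ∈ P j, ¬ G.Adj v w) →
      ¬ (C i).Adj u v)
    -- the special set `S`
    (S : Set V) (i j : Fin (k - 1)) (hij : i ≠ j)
    (hSi : S ∩ ↑(P i) = ∅) (hSj : (S ∩ ↑(P j)).ncard = 2)
    (hSt : ∀ t : Fin (k - 1), t ≠ i → t ≠ j → (S ∩ ↑(P t)).ncard = 1) :
    (G.induce Sᶜ).Connected := by
  have encard_eq (A : Set V) : A.encard = A.ncard := A.toFinite.cast_ncard_eq.symm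
  have hC (t) : IsCycleOn (C t) (P t : Set V) :=
    ⟨hCin t, hCconn t, fun u hu ↦ by rw [encard_eq, hCdeg t u hu, Nat.cast_ofNat]⟩
  have hcard : Fintype.card (Fin (k - 1)) < k := by rw [Fintype.card_fin]; omega
  refine stmt_3_general hPcover (fun v ↦ ?_) hCle hC (fun t hti u v huv ↦ ?_) ?_ hij ?_ ?_ ?_
  · rw [encard_eq]
    exact_mod_cast hcard.trans_le (hdeg v)
  · exact exists_adj_or_adj_of_adj hti (hdom t) (hfar t)
      (hCin t u v huv).1 (hCin t u v huv).2 huv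
  · rw [encard_coe_eq_coe_finsetCard]
    exact_mod_cast hP5 j
  · exact (disjoint_iff_inter_eq_empty.2 hSi).symm
  · rw [encard_eq, hSj, Nat.cast_ofNat]
  · exact fun t hti htj ↦ by rw [encard_eq, hSt t hti htj, Nat.cast_one]
end

section
/- Let k ≥ 3 and m ≥ 5 be integers and set n = (k−1)m. Let G be a simple graph on a vertex set V of size n with a partition V = V_1 ∪ … ∪ V_{k−1} into pairwise disjoint sets each of size m, such that for every i the edges of G with both endpoints in V_i form a cycle passing through every vertex of V_i, for every i < j the edges of G with one endpoint in V_i and one endpoint in V_j form a perfect matching between V_i and V_j (m pairwise disjoint edges covering V_i ∪ V_j), and G has no other edges. Then G is k-vertex-connected and G has exactly kn/2 edges. -/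
/-!
Inside each part the graph is a cycle, hence `2`-connected. Let `S` have at most as many vertices
as there are parts. If some part avoids `S`, it stays connected, and every other vertex outside `S`
has a neighbour in it. Otherwise `S` meets every part in exactly one vertex: every part stays
connected, and two parts remain linked, because at least two matching edges leave the surviving
vertices of the first part and at most one of them ends in `S`.
-/

open Function

section Induce

variable {V ι : Type*} {G : SimpleGraph V}

theorem connected_induce_of_dominating {s t : Set V} (hs : (G.induce s).Connected) (hst : s ⊆ t)
    (hdom : ∀ v ∈ t \ s, ∃ w ∈ s, G.Adj v w) : (G.induce t).Connected := by
  obtain ⟨u, hu⟩ := hs.nonempty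
  refine G.induce_connected_of_patches u (hst hu) fun {v} hv ↦ ?_
  by_cases hvs : v ∈ s
  · exact ⟨s, hst, hu, hvs, hs.preconnected _ _⟩
  · obtain ⟨w, hw, hvw⟩ := hdom v ⟨hv, hvs⟩
    have hunion : (G.induce (s ∪ {v})).Connected :=
      SimpleGraph.connected_induce_union hs.preconnected .of_subsingleton hw rfl hvw.symm
    exact ⟨s ∪ {v}, Set.union_subset hst (Set.singleton_subset_iff.2 hv), .inl hu, .inr rfl,
      hunion.preconnected _ _⟩

theorem connected_induce_iUnion_of_exists_adj [Nonempty ι] {T : ι → Set V}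
    (hT : ∀ i, (G.induce (T i)).Connected)
    (hadj : ∀ i j, i ≠ j → ∃ u ∈ T i, ∃ w ∈ T j, G.Adj u w) :
    (G.induce (⋃ i, T i)).Connected := by
  obtain ⟨i⟩ := ‹Nonempty ι›
  obtain ⟨u, hu⟩ := (hT i).nonempty
  refine G.induce_connected_of_patches u (Set.mem_iUnion_of_mem i hu) fun {v} hv ↦ ?_
  obtain ⟨j, hvj⟩ := Set.mem_iUnion.1 hv
  obtain rfl | hij := eq_or_ne i j
  · exact ⟨T i, Set.subset_iUnion T i, hu, hvj, (hT i).preconnected _ _⟩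
  · obtain ⟨a, ha, b, hb, hab⟩ := hadj i j hij
    have hunion : (G.induce (T i ∪ T j)).Connected :=
      SimpleGraph.connected_induce_union (hT i).preconnected (hT j).preconnected ha hb hab
    exact ⟨T i ∪ T j, Set.union_subset (Set.subset_iUnion T i) (Set.subset_iUnion T j), .inl hu,
      .inr hvj, hunion.preconnected _ _⟩

theorem ncard_neighborSet_induce (s : Set V) (u : s) :
    ((G.induce s).neighborSet u).ncard = (G.neighborSet u ∩ s).ncard := by
  rw [← Set.ncard_image_of_injective _ Subtype.val_injective]
  congr 1
  ext w
  simp [and_comm]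

theorem two_mul_ncard_edgeSet_of_forall_ncard_neighborSet_eq [Finite V] {d : ℕ}
    (hd : ∀ v, (G.neighborSet v).ncard = d) : 2 * G.edgeSet.ncard = d * Nat.card V := by
  classical
  have := Fintype.ofFinite V
  have hdeg (v : V) : G.degree v = d := by
    rw [← hd v, ← G.card_neighborFinset_eq_degree, ← Set.ncard_coe_finset, G.coe_neighborFinset]
  rw [← G.coe_edgeFinset, Set.ncard_coe_finset, ← G.sum_degrees_eq_twice_card_edges]
  simp [hdeg, mul_comm]

end Induce

/-- `k`-vertex-connectivity of a graph: there are more than `k` vertices, and removing fewer than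
`k` of them leaves the graph connected. Cardinalities are extended natural numbers, so that the
notion is meaningful for infinite graphs. -/
def IsVertexConnected {V : Type*} (G : SimpleGraph V) (k : ℕ) : Prop :=
  k < ENat.card V ∧ ∀ S : Set V, S.encard < k → (G.induce Sᶜ).Connected

section VertexConnected

variable {V : Type*} {G : SimpleGraph V}

theorem isVertexConnected_iff_ncard [Finite V] {k : ℕ} (hk : k ≠ 0) :
    IsVertexConnected G k ↔
      k < Nat.card V ∧ ∀ S : Set V, S.ncard ≤ k - 1 → (G.induce Sᶜ).Connected := by
  simp only [IsVertexConnected, ENat.card_eq_coe_natCard, Nat.cast_lt,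
    ← (Set.toFinite _).cast_ncard_eq, Nat.le_sub_one_iff_lt (Nat.pos_of_ne_zero hk)]

theorem IsVertexConnected.connected {k : ℕ} (hG : IsVertexConnected G k) (hk : k ≠ 0) :
    G.Connected := by
  have huniv := hG.2 ∅ (by simpa [pos_iff_ne_zero] using hk)
  rwa [Set.compl_empty, G.induceUnivIso.connected_iff] at huniv

theorem IsVertexConnected.connected_induce_sdiff {s T : Set V} {k : ℕ}
    (hs : IsVertexConnected (G.induce s) k) (hT : (s ∩ T).encard < k) :
    (G.induce (s \ T)).Connected := by
  have hcompl : ((G.induce s).induce (Subtype.val ⁻¹' T)ᶜ).Connected := by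
    refine hs.2 _ ?_
    rwa [← Subtype.val_injective.encard_image, Subtype.image_preimage_coe]
  let f : (G.induce s).induce (Subtype.val ⁻¹' T)ᶜ →g G.induce (s \ T) :=
    { toFun := fun v ↦ ⟨v.1.1, v.1.2, v.2⟩
      map_rel' := id }
  exact hcompl.map f fun v ↦ ⟨⟨⟨v.1, v.2.1⟩, v.2.2⟩, rfl⟩

theorem exists_isHamiltonianCycle_of_ncard_neighborSet_eq_two [Finite V] [DecidableEq V]
    (hG : G.Connected) (htwo : ∀ v, (G.neighborSet v).ncard = 2) (v : V) :
    ∃ p : G.Walk v v, p.IsHamiltonianCycle := by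
  have hcycles : G.IsCycles := fun w _ ↦ htwo w
  have hnbr : (G.neighborSet v).Nonempty := Set.nonempty_of_ncard_ne_zero (by simp [htwo v])
  obtain ⟨p, hp, hverts⟩ := hcycles.exists_cycle_toSubgraph_verts_eq_connectedComponentSupp
    (c := G.connectedComponentMk v) rfl hnbr
  refine ⟨p, hp, hp.isPath_tail.isHamiltonian_of_mem fun w ↦ ?_⟩
  have hw : w ∈ p.support := by
    rw [← SimpleGraph.Walk.mem_verts_toSubgraph, hverts]
    exact SimpleGraph.ConnectedComponent.sound (hG.preconnected w v)
  rw [SimpleGraph.Walk.support_tail_of_not_nil p hp.not_nil]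
  obtain rfl | hw := p.mem_support_iff.1 hw
  · exact SimpleGraph.Walk.end_mem_tail_support hp.not_nil
  · exact hw

theorem connected_induce_compl_singleton_of_isHamiltonianCycle [DecidableEq V] {v : V}
    {p : G.Walk v v} (hp : p.IsHamiltonianCycle) : (G.induce {v}ᶜ).Connected := by
  have htail_not_nil : ¬ p.tail.Nil := by
    rw [← SimpleGraph.Walk.length_eq_zero_iff]
    have := p.length_tail_add_one hp.not_nil
    have := hp.isCycle.three_le_length
    lia
  have htail : p.tail.dropLast.support ++ [v] = p.tail.support :=
    SimpleGraph.Walk.support_dropLast_concat htail_not_nil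
  have hnodup : (p.tail.dropLast.support ++ [v]).Nodup :=
    htail ▸ hp.isCycle.isPath_tail.support_nodup
  have hmem (w : V) : w ∈ p.tail.dropLast.support ++ [v] :=
    htail ▸ hp.isHamiltonian_tail.mem_support w
  have hsupport : ({v}ᶜ : Set V) = {w | w ∈ p.tail.dropLast.support} := by
    ext w
    have := hmem w
    grind
  exact hsupport ▸ p.tail.dropLast.connected_induce_support

theorem isVertexConnected_two_of_isHamiltonianCycle [DecidableEq V] {v : V} {p : G.Walk v v}
    (hp : p.IsHamiltonianCycle) : IsVertexConnected G 2 := by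
  have := hp.finite
  have := Fintype.ofFinite V
  refine ⟨?_, fun S hS ↦ ?_⟩
  · rw [ENat.card_eq_coe_fintype_card, ← hp.length_eq]
    exact_mod_cast hp.isCycle.three_le_length
  · have hS' : S.Subsingleton := by
      rw [← Set.encard_le_one_iff_subsingleton]
      exact Order.le_of_lt_succ hS
    obtain rfl | ⟨w, rfl⟩ := hS'.eq_empty_or_singleton
    · have huniv : (∅ᶜ : Set V) = {w | w ∈ p.support} := by
        ext w; simp [hp.mem_support]
      exact huniv ▸ p.connected_induce_support
    · exact connected_induce_compl_singleton_of_isHamiltonianCycle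
        (hp.rotate (hp.mem_support w))

end VertexConnected

section SetCardinality

theorem subsingleton_inter_of_encard_le_card {α ι : Type*} [Finite ι] {P : ι → Set α} {S : Set α}
    (hP : Pairwise (Disjoint on P)) (hmeet : ∀ i, (P i ∩ S).Nonempty)
    (hS : S.encard ≤ ENat.card ι) (i : ι) : (P i ∩ S).Subsingleton := by
  choose f hfP hfS using hmeet
  have hindex {i j : ι} {v : α} (hi : v ∈ P i) (hj : v ∈ P j) : i = j :=
    hP.eq (Set.not_disjoint_iff.2 ⟨v, hi, hj⟩)
  have hinj : Injective f := fun i j hij ↦ hindex (hfP i) (hij ▸ hfP j)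
  have hrange : Set.range f = S := by
    refine (Set.finite_range f).eq_of_subset_of_encard_le (Set.range_subset_iff.2 hfS) ?_
    rwa [← Set.image_univ, hinj.encard_image, Set.encard_univ]
  have heq : ∀ v ∈ P i ∩ S, v = f i := by
    rintro v ⟨hvP, hvS⟩
    obtain ⟨j, rfl⟩ := hrange ▸ hvS
    rw [hindex hvP (hfP j)]
  exact fun v hv w hw ↦ (heq v hv).trans (heq w hw).symm

theorem nontrivial_sdiff_of_subsingleton_inter {α : Type*} {s S : Set α} (hs : 2 < s.encard)
    (hS : (s ∩ S).Subsingleton) : (s \ S).Nontrivial := by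
  by_contra h
  refine hs.not_ge ?_
  calc s.encard = (s \ S).encard + (s ∩ S).encard := (Set.encard_sdiff_add_encard_inter s S).symm
    _ ≤ 1 + 1 := add_le_add (Set.encard_le_one_iff_subsingleton.2 (Set.not_nontrivial_iff.1 h))
      (Set.encard_le_one_iff_subsingleton.2 hS)
    _ = 2 := one_add_one_eq_two

theorem natCard_add_one_lt_card_of_pairwise_disjoint {α ι : Type*} [Finite ι] [Nonempty ι]
    {P : ι → Set α} (hP : Pairwise (Disjoint on P)) (hcard : ∀ i, 2 < (P i).encard) :
    ((Nat.card ι + 1 : ℕ) : ℕ∞) < ENat.card α := by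
  have := Fintype.ofFinite ι
  have hpos : 0 < Nat.card ι := Nat.card_pos
  calc ((Nat.card ι + 1 : ℕ) : ℕ∞)
      < (Nat.card ι * 3 : ℕ) := by exact_mod_cast (by lia)
    _ = ∑ _i : ι, (3 : ℕ∞) := by simp
    _ ≤ ∑ i, (P i).encard := Finset.sum_le_sum fun i _ ↦ Order.succ_le_of_lt (hcard i)
    _ = (⋃ i, P i).encard := by
        rw [Set.encard_iUnion_of_finite hP, finsum_eq_sum_of_fintype]
    _ ≤ ENat.card α := Set.encard_le_card

end SetCardinality

/-- A partition of the vertices of a graph into the sets `P i`, any two of which are joined by a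
perfect matching. The matching condition, required for both orders of the two parts, is that every
vertex of one part has exactly one neighbour in the other. -/
structure IsMatchedPartition {V ι : Type*} (G : SimpleGraph V) (P : ι → Set V) : Prop where
  pairwise_disjoint : Pairwise (Disjoint on P)
  exists_mem : ∀ v, ∃ i, v ∈ P i
  ncard_neighborSet_inter : ∀ i j, i ≠ j → ∀ u ∈ P i, (G.neighborSet u ∩ P j).ncard = 1

namespace IsMatchedPartition

variable {V ι : Type*} {G : SimpleGraph V} {P : ι → Set V} {i j : ι}

theorem iUnion_eq_univ (hP : IsMatchedPartition G P) : ⋃ i, P i = Set.univ :=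
  Set.iUnion_eq_univ_iff.2 hP.exists_mem

theorem existsUnique_adj (hP : IsMatchedPartition G P) (hij : i ≠ j) {u : V} (hu : u ∈ P i) :
    ∃! w, G.Adj u w ∧ w ∈ P j := by
  obtain ⟨w, hw⟩ := Set.ncard_eq_one.1 (hP.ncard_neighborSet_inter i j hij u hu)
  exact ⟨w, hw.ge rfl, fun z hz ↦ hw.le hz⟩

theorem connected_induce_of_subset (hP : IsMatchedPartition G P) {t : Set V}
    (hj : (G.induce (P j)).Connected) (ht : P j ⊆ t) : (G.induce t).Connected := by
  refine connected_induce_of_dominating hj ht fun v hv ↦ ?_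
  obtain ⟨i, hi⟩ := hP.exists_mem v
  have hij : i ≠ j := by
    rintro rfl
    exact hv.2 hi
  obtain ⟨w, ⟨hvw, hw⟩, -⟩ := hP.existsUnique_adj hij hi
  exact ⟨w, hw, hvw⟩

theorem exists_adj_sdiff (hP : IsMatchedPartition G P) (hij : i ≠ j) {S : Set V}
    (hi : (P i \ S).Nontrivial) (hj : (P j ∩ S).Subsingleton) :
    ∃ u ∈ P i \ S, ∃ w ∈ P j \ S, G.Adj u w := by
  obtain ⟨a, ha, b, hb, hab⟩ := hi
  obtain ⟨a', ⟨haa', ha'⟩, -⟩ := hP.existsUnique_adj hij ha.1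
  obtain ⟨b', ⟨hbb', hb'⟩, -⟩ := hP.existsUnique_adj hij hb.1
  have hne : a' ≠ b' := by
    rintro rfl
    exact hab ((hP.existsUnique_adj hij.symm ha').unique ⟨haa'.symm, ha.1⟩ ⟨hbb'.symm, hb.1⟩)
  by_cases ha'S : a' ∈ S
  · exact ⟨b, hb, b', ⟨hb', fun hb'S ↦ hne (hj ⟨ha', ha'S⟩ ⟨hb', hb'S⟩)⟩, hbb'⟩
  · exact ⟨a, ha, a', ⟨ha', ha'S⟩, haa'⟩

theorem ncard_neighborSet_add_one [Finite ι] (hP : IsMatchedPartition G P) {u : V} (hu : u ∈ P i)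
    (hfin : (G.neighborSet u).Finite) :
    (G.neighborSet u).ncard + 1 = (G.neighborSet u ∩ P i).ncard + Nat.card ι := by
  classical
  have := Fintype.ofFinite ι
  have hdisj : Pairwise (Disjoint on fun j ↦ G.neighborSet u ∩ P j) := fun j l hjl ↦
    (hP.pairwise_disjoint hjl).mono Set.inter_subset_right Set.inter_subset_right
  have hother : ∑ j ∈ Finset.univ.erase i, (G.neighborSet u ∩ P j).ncard = Nat.card ι - 1 := by
    rw [Finset.sum_congr rfl fun j hj ↦
      hP.ncard_neighborSet_inter i j (Finset.ne_of_mem_erase hj).symm u hu]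
    simp
  calc (G.neighborSet u).ncard + 1
      = (⋃ j, G.neighborSet u ∩ P j).ncard + 1 := by
        rw [← Set.inter_iUnion, hP.iUnion_eq_univ, Set.inter_univ]
    _ = ∑ j, (G.neighborSet u ∩ P j).ncard + 1 := by
        rw [Set.ncard_iUnion_of_finite (fun j ↦ hfin.inter_of_left _) hdisj,
          finsum_eq_sum_of_fintype]
    _ = (G.neighborSet u ∩ P i).ncard + (Nat.card ι - 1 + 1) := by
        rw [← Finset.add_sum_erase _ _ (Finset.mem_univ i), hother, add_assoc]
    _ = (G.neighborSet u ∩ P i).ncard + Nat.card ι := by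
        rw [Nat.sub_add_cancel (Nat.card_pos_iff.2 ⟨⟨i⟩, inferInstance⟩)]

theorem isVertexConnected [Finite ι] [Nonempty ι] (hP : IsMatchedPartition G P)
    (htwo : ∀ i, IsVertexConnected (G.induce (P i)) 2) :
    IsVertexConnected G (Nat.card ι + 1) := by
  have hcard (i : ι) : 2 < (P i).encard := (htwo i).1
  refine ⟨natCard_add_one_lt_card_of_pairwise_disjoint hP.pairwise_disjoint hcard, fun S hS ↦ ?_⟩
  by_cases hmeet : ∀ i, (P i ∩ S).Nonempty
  · have hsub (i : ι) : (P i ∩ S).Subsingleton := by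
      refine subsingleton_inter_of_encard_le_card hP.pairwise_disjoint hmeet ?_ i
      rw [ENat.card_eq_coe_natCard]
      exact Order.le_of_lt_add_one hS
    rw [Set.compl_eq_univ_sdiff, ← hP.iUnion_eq_univ, Set.iUnion_sdiff]
    exact connected_induce_iUnion_of_exists_adj
      (fun i ↦ (htwo i).connected_induce_sdiff
        ((Set.encard_le_one_iff_subsingleton.2 (hsub i)).trans_lt (by norm_num)))
      fun i j hij ↦ hP.exists_adj_sdiff hij
        (nontrivial_sdiff_of_subsingleton_inter (hcard i) (hsub i)) (hsub j)
  · obtain ⟨j, hj⟩ := not_forall.1 hmeet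
    exact hP.connected_induce_of_subset ((htwo j).connected two_ne_zero)
      (Set.disjoint_iff_inter_eq_empty.2 (Set.not_nonempty_iff_eq_empty.1 hj)).subset_compl_right

end IsMatchedPartition

theorem stmt_4_general {V ι : Type*} [Finite V] [Finite ι] [Nonempty ι] {G : SimpleGraph V}
    {P : ι → Set V} (hP : IsMatchedPartition G P)
    (hcycle : ∀ i, (G.induce (P i)).Connected ∧
      ∀ u ∈ P i, (G.neighborSet u ∩ P i).ncard = 2) :
    IsVertexConnected G (Nat.card ι + 1) ∧
      2 * G.edgeSet.ncard = (Nat.card ι + 1) * Nat.card V := by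
  classical
  constructor
  · refine hP.isVertexConnected fun i ↦ ?_
    obtain ⟨v⟩ := (hcycle i).1.nonempty
    obtain ⟨p, hp⟩ := exists_isHamiltonianCycle_of_ncard_neighborSet_eq_two (hcycle i).1
      (fun u ↦ (ncard_neighborSet_induce _ u).trans ((hcycle i).2 u u.2)) v
    exact isVertexConnected_two_of_isHamiltonianCycle hp
  · refine two_mul_ncard_edgeSet_of_forall_ncard_neighborSet_eq fun v ↦ ?_
    obtain ⟨i, hi⟩ := hP.exists_mem v
    have hdeg := hP.ncard_neighborSet_add_one hi (Set.toFinite _)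
    rw [(hcycle i).2 v hi] at hdeg
    lia

/-- Let `k ≥ 3`, `m ≥ 5` and `n = (k-1)m`. Let `G` be a simple graph on a
vertex set `V` of size `n`, partitioned into pairwise disjoint sets `V_1, …, V_{k-1}` of
size `m`, such that for every `i` the edges of `G` inside `V_i` form a spanning cycle of
`V_i` (formalized: `G[V_i]` is connected and every vertex of `V_i` has exactly `2`
neighbors in `V_i`), and for all `i ≠ j` the edges of `G` between `V_i` and `V_j` form a
perfect matching (formalized: every vertex of `V_i` has exactly one neighbor in `V_j`).
These conditions account for all edges of `G`. Then `G` is `k`-vertex-connected and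
`G` has exactly `k * n / 2` edges. -/
theorem stmt_4 {V : Type*} [Fintype V] (k m n : ℕ) (hk : 3 ≤ k) (hm : 5 ≤ m)
    (hn : n = (k - 1) * m) (hcard : Fintype.card V = n)
    (G : SimpleGraph V) (P : Fin (k - 1) → Finset V)
    -- the `P i` partition `V` into sets of size `m`
    (hPdisj : ∀ i j : Fin (k - 1), i ≠ j → Disjoint (P i) (P j))
    (hPcover : ∀ v : V, ∃ i : Fin (k - 1), v ∈ P i)
    (hPcard : ∀ i : Fin (k - 1), (P i).card = m)
    -- inside each part, the edges of `G` form a spanning cycle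
    (hcycle : ∀ i : Fin (k - 1),
      (G.induce (↑(P i) : Set V)).Connected ∧
      ∀ u ∈ P i, (G.neighborSet u ∩ ↑(P i)).ncard = 2)
    -- between any two parts, the edges of `G` form a perfect matching
    (hmatch : ∀ i j : Fin (k - 1), i ≠ j →
      ∀ u ∈ P i, (G.neighborSet u ∩ ↑(P j)).ncard = 1) :
    (k < Fintype.card V ∧
      ∀ S : Set V, S.ncard ≤ k - 1 → (G.induce Sᶜ).Connected) ∧
    G.edgeSet.ncard = k * n / 2 := by
  have hk' : Nat.card (Fin (k - 1)) + 1 = k := by rw [Nat.card_fin]; lia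
  have : Nonempty (Fin (k - 1)) := ⟨⟨0, by lia⟩⟩
  have hP : IsMatchedPartition G fun i ↦ (P i : Set V) :=
    ⟨fun i j hij ↦ Finset.disjoint_coe.2 (hPdisj i j hij), hPcover, hmatch⟩
  have h := stmt_4_general hP hcycle
  rw [hk', isVertexConnected_iff_ncard (by lia), Nat.card_eq_fintype_card] at h
  exact ⟨h.1, hcard ▸ Nat.eq_div_of_mul_eq_right two_ne_zero h.2⟩
end
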